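/- Let β ≥ 2 be a real number, s, t ∈ ℝ, and n ≥ 1. Then for all p, q ∈ B_n with (p, q) ≠ (0, 0) one has Δ_n(β, s, t) ≤ β^{−n}|qs − p| and Δ_n(β, s, t) ≤ β^{−n}|qt − p|. -/

import Mathlib

/-!
Writing `c = (0, 1, s, t)` for the translation digits, each map is `φ_a(x) = (x + c a) / β`, so
`β ^ n * φ_w(0) = ∑ j, c (w_{n-j}) β ^ j` (`phiWord_zero_mul_pow`). Given `q = ∑ ω_j β ^ j` and
`p = ∑ η_j β ^ j`, the word carrying the digit `s` (or `t`) where `ω` is `1` and the word carrying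
the digit `1` where `η` is `1` (both carrying the digit `0` elsewhere) take, after scaling by
`β ^ n`, the values `q s` (or `q t`) and `p` at `0`. They share no nonzero letter, so they can
coincide only if `ω = η = 0`, that is, `p = q = 0`; hence `(p, q) ≠ (0, 0)` makes them an
admissible pair in the minimum defining `Δ_n`.
-/

open Filter Polynomial

/-- The four maps of the IFS Φ_{β,s,t}: x/β, (x+1)/β, (x+s)/β, (x+t)/β. -/
noncomputable def phiMap (β s t : ℝ) : Fin 4 → ℝ → ℝ
  | 0 => fun x => x / β
  | 1 => fun x => (x + 1) / β
  | 2 => fun x => (x + s) / β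
  | 3 => fun x => (x + t) / β

/-- For a word w = i₁…iₙ, the composition φ_{i₁} ∘ ⋯ ∘ φ_{iₙ}. -/
noncomputable def phiWord (β s t : ℝ) {n : ℕ} (w : Fin n → Fin 4) : ℝ → ℝ :=
  (List.ofFn fun k => phiMap β s t (w k)).foldr (· ∘ ·) id

/-- Φ_{β,s,t} has exact overlaps: two distinct words of the same length n ≥ 1
give the same map. -/
def HasExactOverlaps (β s t : ℝ) : Prop :=
  ∃ n : ℕ, 1 ≤ n ∧ ∃ i j : Fin n → Fin 4, i ≠ j ∧ phiWord β s t i = phiWord β s t j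

/-- Δ_n(β,s,t) = min over distinct words i ≠ j of length n of |φ_i(0) − φ_j(0)|. -/
noncomputable def Delta (β s t : ℝ) (n : ℕ) : ℝ :=
  sInf {d : ℝ | ∃ i j : Fin n → Fin 4, i ≠ j ∧ d = |phiWord β s t i 0 - phiWord β s t j 0|}

/-- B_n = { Σ_{j=1}^n ω_j β^{j-1} : ω_j ∈ {0,1} }. -/
def Bset (β : ℝ) (n : ℕ) : Set ℝ :=
  {x : ℝ | ∃ ω : Fin n → ℝ, (∀ j, ω j = 0 ∨ ω j = 1) ∧ x = ∑ j : Fin n, ω j * β ^ (j : ℕ)}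

/-- The translation digits `0, 1, s, t` of the four maps. -/
def digit (s t : ℝ) : Fin 4 → ℝ := ![0, 1, s, t]

lemma phiMap_eq (β s t : ℝ) (a : Fin 4) (x : ℝ) :
    phiMap β s t a x = (x + digit s t a) / β := by
  fin_cases a <;> simp [phiMap, digit]

/-- The `β`-expansion of `φ_w(0)`; the letters occur in reverse order because the first letter of
`w` is the outermost map. -/
lemma phiWord_zero_mul_pow {β : ℝ} (s t : ℝ) (hβ : β ≠ 0) {n : ℕ} (w : Fin n → Fin 4) :
    phiWord β s t w 0 * β ^ n = ∑ j : Fin n, digit s t (w j.rev) * β ^ (j : ℕ) := by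
  induction n with
  | zero => simp [phiWord]
  | succ n ih =>
    have h : phiWord β s t w 0
        = (phiWord β s t (fun k => w k.succ) 0 + digit s t (w 0)) / β := by
      rw [← phiMap_eq]
      simp [phiWord, List.ofFn_succ]
    have hw := ih (fun k => w k.succ)
    rw [Fin.sum_univ_castSucc, h]
    simp only [Fin.rev_castSucc, Fin.rev_last, Fin.val_castSucc, Fin.val_last]
    rw [← hw]
    field_simp
    ring

/-- Both bounds at once: `a` is the letter whose digit (`s` or `t`) multiplies `q`. -/
lemma Delta_le_digit {β s t : ℝ} (hβ : 2 ≤ β) {n : ℕ} {p q : ℝ} (hp : p ∈ Bset β n)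
    (hq : q ∈ Bset β n) (hpq : (p, q) ≠ (0, 0)) (a : Fin 4) (ha0 : a ≠ 0) (ha1 : a ≠ 1) :
    Delta β s t n ≤ β ^ (-(n : ℤ)) * |q * digit s t a - p| := by
  classical
  obtain ⟨η, hη, rfl⟩ := hp
  obtain ⟨ω, hω, rfl⟩ := hq
  have hβ0 : 0 < β := by linarith
  set i : Fin n → Fin 4 := fun k => if ω k.rev = 1 then a else 0 with hi
  set j : Fin n → Fin 4 := fun k => if η k.rev = 1 then 1 else 0 with hj
  have hi' : phiWord β s t i 0 * β ^ n = (∑ k : Fin n, ω k * β ^ (k : ℕ)) * digit s t a := by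
    rw [phiWord_zero_mul_pow s t hβ0.ne', Finset.sum_mul]
    refine Finset.sum_congr rfl fun k _ => ?_
    rcases hω k with h | h
    · simp [hi, h, digit]
    · simp [hi, h, mul_comm]
  have hj' : phiWord β s t j 0 * β ^ n = ∑ k : Fin n, η k * β ^ (k : ℕ) := by
    rw [phiWord_zero_mul_pow s t hβ0.ne']
    refine Finset.sum_congr rfl fun k _ => ?_
    rcases hη k with h | h <;> simp [hj, h, digit]
  have hne : i ≠ j := by
    intro hij
    have hzero : ∀ k, ω k = 0 ∧ η k = 0 := by
      intro k
      have hk : i k.rev = j k.rev := congrFun hij k.rev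
      simp only [hi, hj, Fin.rev_rev] at hk
      rcases hω k with h | h <;> rcases hη k with h' | h' <;> simp_all
    exact hpq (by simp [hzero])
  have hval : β ^ (-(n : ℤ)) * |(∑ k : Fin n, ω k * β ^ (k : ℕ)) * digit s t a
      - ∑ k : Fin n, η k * β ^ (k : ℕ)| = |phiWord β s t i 0 - phiWord β s t j 0| := by
    rw [← hi', ← hj', ← sub_mul, abs_mul, abs_of_pos (pow_pos hβ0 n), zpow_neg, zpow_natCast]
    field_simp
  rw [hval]
  refine csInf_le ⟨0, ?_⟩ ⟨i, j, hne, rfl⟩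
  rintro d ⟨_, _, _, rfl⟩
  exact abs_nonneg _

/-- for all p, q ∈ B_n with (p,q) ≠ (0,0),
Δ_n(β,s,t) ≤ β^{−n}|qs−p| and Δ_n(β,s,t) ≤ β^{−n}|qt−p|. -/
theorem stmt2 (β s t : ℝ) (hβ : 2 ≤ β) (n : ℕ) (hn : 1 ≤ n)
    (p q : ℝ) (hp : p ∈ Bset β n) (hq : q ∈ Bset β n) (hpq : (p, q) ≠ (0, 0)) :
    Delta β s t n ≤ β ^ (-(n : ℤ)) * |q * s - p| ∧
      Delta β s t n ≤ β ^ (-(n : ℤ)) * |q * t - p| :=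
  ⟨Delta_le_digit hβ hp hq hpq 2 (by decide) (by decide),
    Delta_le_digit hβ hp hq hpq 3 (by decide) (by decide)⟩
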